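/- Assume condition (R). Then z ↦ λ_{γ,σ}(z;q) has infinitely many zeros, all real, and for every z∈ℂ the Weierstrassian factorization λ_{γ,σ}(z;q) = (1/Γ_q(γ+1)) · ∏_{n≥1} (1 − z²/ε_{γ,σ,n}(q)²) holds, the infinite product converging uniformly on compact subsets of ℂ. -/

import Mathlib

noncomputable def qPochInf (a q : ℝ) : ℝ := ∏' k : ℕ, (1 - a * q ^ k)

noncomputable def qGamma (q x : ℝ) : ℝ :=
  qPochInf q q * (1 - q) ^ (1 - x) / qPochInf (q ^ x) q

noncomputable def qML (γ σ q : ℝ) (z : ℂ) : ℂ :=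
  ∑' n : ℕ,
    (((-1) ^ n * σ ^ (2 * n) * q ^ (n * (n - 1)) / qGamma q (2 * n + γ + 1) : ℝ) : ℂ) * z ^ (2 * n)

noncomputable def qMLR (γ σ q : ℝ) (x : ℝ) : ℝ :=
  ∑' n : ℕ,
    ((-1) ^ n * σ ^ (2 * n) * q ^ (n * (n - 1)) / qGamma q (2 * n + γ + 1)) * x ^ (2 * n)

def condR (q γ : ℝ) : Prop :=
  (γ = 0 ∨ γ = 1) ∨
    (γ ∈ Set.Ioo (0 : ℝ) 2 ∧ γ ≠ 1 ∧
      1 < q⁻¹ * (1 - q) * (1 - q ^ (γ + 1)) * (1 - q ^ (γ + 2)))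

noncomputable def radiusStarlike (α : ℝ) (f : ℂ → ℂ) : ℝ :=
  sSup {r : ℝ | 0 < r ∧ ∀ z : ℂ, 0 < ‖z‖ → ‖z‖ < r →
    α < (z * deriv f z / f z).re}

noncomputable def radiusConvex (α : ℝ) (f : ℂ → ℂ) : ℝ :=
  sSup {r : ℝ | 0 < r ∧ ∀ z : ℂ, ‖z‖ < r →
    α < (1 + z * deriv (deriv f) z / deriv f z).re}

noncomputable def fML (γ σ q : ℝ) (z : ℂ) : ℂ :=
  Complex.exp ((1 / ((γ : ℂ) + 1)) *
    Complex.log (z ^ ((γ : ℂ) + 1) * (qGamma q (γ + 1) : ℂ) * qML γ σ q z))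

noncomputable def gML (γ σ q : ℝ) (z : ℂ) : ℂ :=
  z * (qGamma q (γ + 1) : ℂ) * qML γ σ q z

noncomputable def hML (γ σ q : ℝ) (z : ℂ) : ℂ :=
  z * (qGamma q (γ + 1) : ℂ) *
    ∑' n : ℕ,
      (((-1) ^ n * σ ^ (2 * n) * q ^ (n * (n - 1)) / qGamma q (2 * n + γ + 1) : ℝ) : ℂ) * z ^ n

noncomputable def hMLR (γ σ q : ℝ) (x : ℝ) : ℝ :=
  x * qGamma q (γ + 1) *
    ∑' n : ℕ,
      ((-1) ^ n * σ ^ (2 * n) * q ^ (n * (n - 1)) / qGamma q (2 * n + γ + 1)) * x ^ n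

/-!
In the variable `t = -(σ (1 - q) z) ^ 2`, `λ_{γ,σ}` becomes a power series with positive
coefficients and order less than one, so by Jensen's formula it is the genus zero product over its
zeros. It remains to see that these zeros are simple, real and negative. Condition (R) with
`γ ≠ 0, 1` forces `q < 1 / 2`; then `aₙ aₙ₊₂ < aₙ₊₁ ^ 2 / 4`, and Hutchinson's argument applies: at
suitable negative points one term dominates the polynomial truncations, which therefore change sign
once for each degree. For `γ = 0, 1` the series are a `q`-cosine `C` and a `q`-sine `S`, linked by
functional equations between the points `t` and `q ^ 2 t`. Iterating these towards `0` writes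
`Im t · Im (C(t) conj (S(t)))` for `t` off the real axis, and the Wronskian `C' S - C S'` at real
points, as sums of nonnegative terms that are not all zero, which excludes nonreal and multiple
zeros respectively.
-/

open Filter Topology

/-- `f` is the entire function of genus zero `∏ j, (1 + t * w j)`. Vanishing entries of `w`
contribute trivial factors, so that finite products are covered as well. -/
structure HasLinearFactors {ι : Type*} (f : ℂ → ℂ) (w : ι → ℂ) : Prop where
  summable : Summable w
  eq_tprod : ∀ t, f t = ∏' j, (1 + t * w j)

namespace HasLinearFactors

variable {ι κ : Type*} {f : ℂ → ℂ} {w : ι → ℂ}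

lemma eq_zero_iff (hf : HasLinearFactors f w) (t : ℂ) : f t = 0 ↔ ∃ j, 1 + t * w j = 0 := by
  rw [hf.eq_tprod]
  refine ⟨fun h ↦ ?_, tprod_of_exists_eq_zero⟩
  contrapose! h
  exact tprod_one_add_ne_zero_of_summable h (hf.summable.mul_left t).norm

lemma apply_zero (hf : HasLinearFactors f w) : f 0 = 1 := by
  simp [hf.eq_tprod]

lemma hasProdUniformlyOn (hf : HasLinearFactors f w) {K : Set ℂ} (hK : IsCompact K) :
    HasProdUniformlyOn (fun j t ↦ 1 + t * w j) f K := by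
  obtain ⟨M, hM⟩ := hK.isBounded.exists_norm_le
  have h := (hf.summable.norm.mul_left M).hasProdUniformlyOn_one_add (f := fun j t ↦ t * w j) hK
    (.of_forall fun j t ht ↦ by
      rw [norm_mul]
      exact mul_le_mul_of_nonneg_right (hM t ht) (norm_nonneg _))
    fun j ↦ by fun_prop
  exact h.congr_right fun t _ ↦ (hf.eq_tprod t).symm

lemma differentiable (hf : HasLinearFactors f w) : Differentiable ℂ f := by
  have h : HasProdLocallyUniformlyOn (fun j t ↦ 1 + t * w j) f Set.univ :=
    hasProdLocallyUniformlyOn_of_forall_compact isOpen_univ fun K _ ↦ hf.hasProdUniformlyOn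
  exact differentiableOn_univ.1 <| h.differentiableOn
    (.of_forall fun s ↦ by
      simpa [Finset.prod_fn] using DifferentiableOn.finsetProd fun _ _ ↦ by fun_prop) isOpen_univ

lemma exists_eq_mul (hf : HasLinearFactors f w) (i : ι) [DecidableEq ι] :
    ∃ g, HasLinearFactors g (Function.update w i 0) ∧ ∀ t, f t = (1 + t * w i) * g t := by
  have hs : Summable (Function.update w i 0) := hf.summable.update i 0
  refine ⟨fun t ↦ ∏' j, (1 + t * Function.update w i 0 j), ⟨hs, fun _ ↦ rfl⟩, fun t ↦ ?_⟩
  have hupd (j : ι) :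
      1 + t * Function.update w i 0 j = Function.update (fun j ↦ 1 + t * w j) i 1 j := by
    by_cases hj : j = i <;> simp [hj]
  have hm : Multipliable (Function.update (fun j ↦ 1 + t * w j) i 1) :=
    (multipliable_one_add_of_summable (hs.mul_left t).norm).congr hupd
  rw [hf.eq_tprod, hm.tprod_eq_mul_tprod_ite']
  simp_rw [hupd, Function.update_apply]

lemma injOn_support (hf : HasLinearFactors f w) (hsimple : ∀ t, f t = 0 → deriv f t ≠ 0) :
    Set.InjOn w w.support := by
  classical
  intro i hi j _ hij
  by_contra hne
  have hroot : 1 + -(w i)⁻¹ * w i = 0 := by rw [neg_mul, inv_mul_cancel₀ hi, add_neg_cancel]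
  obtain ⟨g, hg, hfg⟩ := hf.exists_eq_mul i
  have hg0 : g (-(w i)⁻¹) = 0 :=
    (hg.eq_zero_iff _).2 ⟨j, by rwa [Function.update_of_ne (Ne.symm hne), ← hij]⟩
  refine hsimple _ ((hf.eq_zero_iff _).2 ⟨i, hroot⟩) ?_
  have hd := ((hasDerivAt_mul_const (w i)).const_add 1).mul
    (hg.differentiable (-(w i)⁻¹)).hasDerivAt
  rw [show f = (fun t ↦ 1 + t * w i) * g from funext hfg, hd.deriv, hg0, hroot]
  ring

lemma reindex_zeros (hf : HasLinearFactors f w) (hw : Set.InjOn w w.support) {x : κ → ℂ}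
    (hx : Function.Injective x) (hrange : Set.range x = {t | f t = 0}) :
    HasLinearFactors f fun n ↦ -(x n)⁻¹ := by
  have hzero (n : κ) : f (x n) = 0 := hrange.subset ⟨n, rfl⟩
  choose J hJ using fun n ↦ (hf.eq_zero_iff (x n)).1 (hzero n)
  have hx0 (n : κ) : x n ≠ 0 := fun h ↦ by simpa [h, hf.apply_zero] using hzero n
  have hwJ (n : κ) : w (J n) = -(x n)⁻¹ := by
    rw [eq_neg_iff_add_eq_zero, ← mul_right_inj' (hx0 n), mul_add, mul_inv_cancel₀ (hx0 n),
      mul_zero, add_comm, hJ]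
  have hJinj : Function.Injective J := fun m n hmn ↦
    hx <| inv_injective <| neg_injective <| by rw [← hwJ, ← hwJ, hmn]
  have hsupp : w.support ⊆ Set.range J := by
    intro j hj
    obtain ⟨n, hn⟩ : -(w j)⁻¹ ∈ Set.range x :=
      hrange ▸ (hf.eq_zero_iff _).2 ⟨j, by rw [neg_mul, inv_mul_cancel₀ hj, add_neg_cancel]⟩
    have hval : w (J n) = w j := by rw [hwJ, hn, inv_neg, inv_inv, neg_neg]
    exact ⟨n, hw (by rwa [Function.mem_support, hval]) hj hval⟩
  refine ⟨(hf.summable.comp_injective hJinj).congr hwJ, fun t ↦ ?_⟩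
  simp only [← hwJ]
  rw [hf.eq_tprod, ← hJinj.tprod_eq]
  refine Function.mulSupport_subset_iff'.2 fun j hj ↦ ?_
  rw [Function.notMem_support.1 fun h ↦ hj (hsupp h), mul_zero, add_zero]

lemma exists_limit [Countable ι] {F : ℕ → ℂ → ℂ} {u : ℕ → ι → ℂ} {b : ι → ℝ} (hb : Summable b)
    (hF : ∀ N, HasLinearFactors (F N) (u N)) (hu : ∀ N j, ‖u N j‖ ≤ b j)
    (hlim : ∀ t, Tendsto (F · t) atTop (𝓝 (f t))) :
    ∃ (v : ι → ℂ) (φ : ℕ → ℕ), StrictMono φ ∧ Tendsto (u ∘ φ) atTop (𝓝 v) ∧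
      HasLinearFactors f v := by
  have hcpt : IsCompact (Set.univ.pi fun j ↦ Metric.closedBall (0 : ℂ) (b j)) :=
    isCompact_univ_pi fun j ↦ isCompact_closedBall 0 (b j)
  obtain ⟨v, hv, φ, hφ, hφv⟩ := hcpt.tendsto_subseq (x := u) fun N j _ ↦ by simpa using hu N j
  have hvb (j : ι) : ‖v j‖ ≤ b j := by simpa using hv j trivial
  refine ⟨v, φ, hφ, hφv, hb.of_norm_bounded hvb, fun t ↦ ?_⟩
  have hprod : Tendsto (fun N ↦ ∏' j, (1 + t * u (φ N) j)) atTop (𝓝 (∏' j, (1 + t * v j))) :=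
    tendsto_tprod_one_add_of_dominated_convergence (hb.mul_left ‖t‖)
      (fun j ↦ ((continuous_apply j).tendsto v |>.comp hφv).const_mul t)
      (.of_forall fun N j ↦ by
        rw [norm_mul]
        exact mul_le_mul_of_nonneg_left (hu _ _) (norm_nonneg t))
  simp only [← (hF _).eq_tprod t] at hprod
  exact tendsto_nhds_unique ((hlim t).comp hφ.tendsto_atTop) hprod

lemma of_finset {s : Finset ι} (hw : ∀ j ∉ s, w j = 0) (hf : ∀ t, f t = ∏ j ∈ s, (1 + t * w j)) :
    HasLinearFactors f w where
  summable := summable_of_ne_finset_zero hw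
  eq_tprod t := by rw [hf, tprod_eq_prod fun j hj ↦ by rw [hw j hj, mul_zero, add_zero]]

end HasLinearFactors

lemma exists_antitone_norm_enum {E : Type*} [NormedAddCommGroup E] (s : Multiset E) :
    ∃ w : ℕ → E, Antitone (fun j ↦ ‖w j‖) ∧ (∀ j ∉ Finset.range s.card, w j = 0) ∧
      s = (Multiset.range s.card).map w := by
  let l := s.toList.mergeSort fun a b ↦ ‖b‖ ≤ ‖a‖
  have hls : (l : Multiset E) = s :=
    (Multiset.coe_eq_coe.2 (List.mergeSort_perm _ _)).trans s.coe_toList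
  have hsorted : l.Pairwise fun a b ↦ ‖b‖ ≤ ‖a‖ := by
    simpa using List.pairwise_mergeSort (le := fun a b : E ↦ decide (‖b‖ ≤ ‖a‖))
      (by simpa using fun a b c hab hbc ↦ hbc.trans hab)
      (by simpa using fun a b ↦ le_total ‖b‖ ‖a‖) s.toList
  rw [← hls, Multiset.coe_card]
  have hlt {j : ℕ} (hj : l.length ≤ j) : l.getD j 0 = 0 := List.getD_eq_default _ _ hj
  refine ⟨fun j ↦ l.getD j 0, antitone_nat_of_succ_le fun j ↦ ?_,
    fun j hj ↦ hlt (by simpa using hj),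
    congrArg _ (List.ext_getElem (by simp) (by simp +contextual))⟩
  beta_reduce
  obtain hj | hj := lt_or_ge (j + 1) l.length
  · rw [List.getD_eq_getElem _ _ hj, List.getD_eq_getElem _ _ (Nat.lt_of_succ_lt hj)]
    exact List.pairwise_iff_getElem.1 hsorted _ _ _ _ j.lt_succ_self
  · rw [hlt hj, norm_zero]
    exact norm_nonneg _

section Polynomial

open Polynomial

lemma eq_prod_roots_of_coeff_zero_eq_one {K : Type*} [Field K] {P : K[X]} (hP : P.Splits)
    (h0 : P.coeff 0 = 1) : P = (P.roots.map fun z ↦ 1 + C (-z⁻¹) * X).prod := by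
  have hfactor : ∀ z ∈ P.roots, X - C z = C (-z) * (1 + C (-z⁻¹) * X) := by
    intro z hz
    have hz0 : z ≠ 0 := by
      rintro rfl
      simpa [← coeff_zero_eq_eval_zero, h0] using isRoot_of_mem_roots hz
    rw [mul_add, ← mul_assoc, ← C_mul, neg_mul_neg, mul_inv_cancel₀ hz0, C_1, C_neg]
    ring
  have hprod : P = C (P.leadingCoeff * (P.roots.map fun z ↦ -z).prod) *
      (P.roots.map fun z ↦ 1 + C (-z⁻¹) * X).prod := by
    conv_lhs => rw [hP.eq_prod_roots, Multiset.map_congr rfl hfactor, Multiset.prod_map_mul]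
    rw [C_mul, mul_assoc, map_multiset_prod, Multiset.map_map]
    rfl
  have hlead : P.leadingCoeff * (P.roots.map fun z ↦ -z).prod = 1 := by
    have h := congrArg (eval 0) hprod
    rw [eval_mul, eval_C, eval_multiset_prod, Multiset.map_map, ← coeff_zero_eq_eval_zero,
      h0] at h
    simpa using h.symm
  rwa [hlead, C_1, one_mul] at hprod

lemma exists_antitone_norm_factors {P : ℂ[X]} (h0 : P.coeff 0 = 1) :
    ∃ (w : ℕ → ℂ) (d : ℕ), Antitone (fun j ↦ ‖w j‖) ∧ (∀ j ∉ Finset.range d, w j = 0) ∧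
      P = ∏ j ∈ Finset.range d, (1 + C (w j) * X) := by
  obtain ⟨w, hanti, hzero, hw⟩ := exists_antitone_norm_enum (P.roots.map fun z ↦ -z⁻¹)
  refine ⟨w, _, hanti, hzero, ?_⟩
  conv_lhs => rw [eq_prod_roots_of_coeff_zero_eq_one (IsAlgClosed.splits P) h0]
  have h := congrArg (fun s ↦ (s.map fun a ↦ 1 + C a * X).prod) hw
  simp only [Multiset.map_map] at h
  exact h

lemma mahlerMeasure_one_add_C_mul_X (a : ℂ) : (1 + C a * X).mahlerMeasure = max 1 ‖a‖ := by
  obtain rfl | ha := eq_or_ne a 0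
  · simp
  · rw [add_comm, ← C_1, mahlerMeasure_C_mul_X_add_C ha, norm_one, max_comm]

/-- Jensen's inequality in the form of the Mahler measure bound for `P (r * X)`: each of the `j + 1`
largest factors contributes at least as much as the `j`-th one. -/
lemma pow_mul_norm_le_sum {w : ℕ → ℂ} (hw : Antitone fun j ↦ ‖w j‖) {d : ℕ} {P : ℂ[X]}
    (hP : P = ∏ j ∈ Finset.range d, (1 + C (w j) * X)) {N : ℕ} (hN : P.natDegree < N) {j : ℕ}
    (hj : j < d) {r : ℝ} (hr : 0 ≤ r) :
    (r * ‖w j‖) ^ (j + 1) ≤ ∑ n ∈ Finset.range N, ‖P.coeff n‖ * r ^ n := by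
  have hcomp : P.comp (C (r : ℂ) * X) = ∏ j ∈ Finset.range d, (1 + C (r * w j) * X) := by
    rw [hP, Polynomial.prod_comp]
    refine Finset.prod_congr rfl fun _ _ ↦ ?_
    simp only [add_comp, one_comp, mul_comp, C_comp, X_comp, C_mul]
    ring
  have hdeg : (P.comp (C (r : ℂ) * X)).natDegree < N :=
    (natDegree_comp_le.trans <| mul_le_of_le_one_right' <|
      (natDegree_C_mul_le _ _).trans natDegree_X_le).trans_lt hN
  calc (r * ‖w j‖) ^ (j + 1) = ∏ _i ∈ Finset.range (j + 1), r * ‖w j‖ := by simp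
    _ ≤ ∏ i ∈ Finset.range (j + 1), max 1 (r * ‖w i‖) :=
        Finset.prod_le_prod (fun _ _ ↦ by positivity) fun i hi ↦ le_max_of_le_right <|
          mul_le_mul_of_nonneg_left (hw (Finset.mem_range_succ_iff.1 hi)) hr
    _ ≤ ∏ i ∈ Finset.range d, max 1 (r * ‖w i‖) :=
        Finset.prod_le_prod_of_subset_of_one_le (Finset.range_subset_range.2 hj)
          (fun _ _ ↦ by positivity) fun _ _ _ ↦ le_max_left _ _
    _ = (P.comp (C (r : ℂ) * X)).mahlerMeasure := by
        rw [hcomp, Finset.prod_eq_multiset_prod (s := Finset.range d),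
          Finset.prod_eq_multiset_prod, prod_mahlerMeasure_eq_mahlerMeasure_prod,
          Multiset.map_map]
        simp only [Function.comp_def, mahlerMeasure_one_add_C_mul_X, norm_mul, Complex.norm_real,
          Real.norm_of_nonneg hr]
    _ ≤ ∑ n ∈ Finset.range N, ‖(P.comp (C (r : ℂ) * X)).coeff n‖ :=
        (mahlerMeasure_le_sum_norm_coeff _).trans_eq <|
          sum_over_range' _ (fun _ ↦ norm_zero) N hdeg
    _ = ∑ n ∈ Finset.range N, ‖P.coeff n‖ * r ^ n := by
        simp [comp_C_mul_X_coeff, abs_of_nonneg hr]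

lemma HasLinearFactors.eval_of_eq_prod {w : ℕ → ℂ} {s : Finset ℕ} (hw : ∀ j ∉ s, w j = 0)
    {P : ℂ[X]} (hP : P = ∏ j ∈ s, (1 + C (w j) * X)) : HasLinearFactors (P.eval ·) w :=
  .of_finset hw fun t ↦ by simp [hP, eval_prod, mul_comm t]

lemma eval_trunc_mk (a : ℕ → ℂ) (N : ℕ) (t : ℂ) :
    ((PowerSeries.mk a).trunc (N + 1)).eval t = ∑ n ∈ Finset.range (N + 1), a n * t ^ n := by
  rw [eval_eq_sum_range' (PowerSeries.natDegree_trunc_lt _ N)]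
  refine Finset.sum_congr rfl fun n hn ↦ ?_
  rw [PowerSeries.coeff_trunc, if_pos (Finset.mem_range.1 hn), PowerSeries.coeff_mk]

lemma exists_dominated_factors_trunc {a : ℕ → ℂ} (ha : a 0 = 1) {K ρ : ℝ} (hρ : 0 < ρ)
    (hgrowth : ∀ N, ∀ r, 0 ≤ r → ∑ n ∈ Finset.range N, ‖a n‖ * r ^ n ≤ K * Real.exp (r ^ ρ))
    (N : ℕ) : ∃ w : ℕ → ℂ, HasLinearFactors (((PowerSeries.mk a).trunc (N + 1)).eval ·) w ∧
      ∀ j, ‖w j‖ ≤ K * Real.exp 1 / ((j : ℝ) + 1) ^ (1 / ρ) := by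
  set P := (PowerSeries.mk a).trunc (N + 1) with hPdef
  have hcoeff : ∀ n ∈ Finset.range (N + 1), P.coeff n = a n := fun n hn ↦ by
    rw [hPdef, PowerSeries.coeff_trunc, if_pos (Finset.mem_range.1 hn), PowerSeries.coeff_mk]
  have hK : 1 ≤ K := by simpa [ha, Real.zero_rpow hρ.ne'] using hgrowth 1 0 le_rfl
  obtain ⟨w, d, hanti, hzero, hP⟩ := exists_antitone_norm_factors
    ((hcoeff 0 (Finset.mem_range.2 N.succ_pos)).trans ha)
  refine ⟨w, .eval_of_eq_prod hzero hP, fun j ↦ ?_⟩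
  by_cases hj : j < d
  · set r : ℝ := ((j : ℝ) + 1) ^ (1 / ρ)
    have hr : 0 < r := by positivity
    have hrρ : r ^ ρ = j + 1 := by
      rw [← Real.rpow_mul (by positivity), one_div_mul_cancel hρ.ne', Real.rpow_one]
    have hpow : (r * ‖w j‖) ^ (j + 1) ≤ (K * Real.exp 1) ^ (j + 1) := calc
      (r * ‖w j‖) ^ (j + 1) ≤ ∑ n ∈ Finset.range (N + 1), ‖P.coeff n‖ * r ^ n :=
        pow_mul_norm_le_sum hanti hP (PowerSeries.natDegree_trunc_lt _ N) hj hr.le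
      _ = ∑ n ∈ Finset.range (N + 1), ‖a n‖ * r ^ n :=
        Finset.sum_congr rfl fun n hn ↦ by rw [hcoeff n hn]
      _ ≤ K * Real.exp (r ^ ρ) := hgrowth _ r hr.le
      _ ≤ K ^ (j + 1) * Real.exp (r ^ ρ) := by
        gcongr
        exact le_self_pow₀ hK j.succ_ne_zero
      _ = (K * Real.exp 1) ^ (j + 1) := by
        rw [hrρ, mul_pow, ← Real.exp_nat_mul, mul_one, Nat.cast_succ]
    rw [le_div_iff₀' hr]
    exact le_of_pow_le_pow_left₀ j.succ_ne_zero (by positivity) hpow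
  · rw [hzero j (by simpa using hj), norm_zero]
    positivity

end Polynomial

lemma summable_mul_pow_of_growth {a : ℕ → ℂ} {B : ℝ → ℝ}
    (hgrowth : ∀ N, ∀ r, 0 ≤ r → ∑ n ∈ Finset.range N, ‖a n‖ * r ^ n ≤ B r) (t : ℂ) :
    Summable fun n ↦ a n * t ^ n :=
  .of_norm <| summable_of_sum_range_le (c := B ‖t‖) (fun _ ↦ norm_nonneg _) fun N ↦ by
    simpa only [norm_mul, norm_pow] using hgrowth N ‖t‖ (norm_nonneg t)

/-- Hadamard's factorization theorem for power series of order less than one. -/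
theorem exists_hasLinearFactors_tsum {a : ℕ → ℂ} (ha : a 0 = 1) {K ρ : ℝ} (hρ0 : 0 < ρ)
    (hρ1 : ρ < 1)
    (hgrowth : ∀ N, ∀ r, 0 ≤ r → ∑ n ∈ Finset.range N, ‖a n‖ * r ^ n ≤ K * Real.exp (r ^ ρ)) :
    ∃ w : ℕ → ℂ, HasLinearFactors (fun t ↦ ∑' n, a n * t ^ n) w := by
  have hb : Summable fun j : ℕ ↦ K * Real.exp 1 / ((j : ℝ) + 1) ^ (1 / ρ) := by
    have h : Summable fun j : ℕ ↦ 1 / |(j : ℝ) + 1| ^ (1 / ρ) :=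
      Real.summable_one_div_nat_add_rpow 1 (1 / ρ) |>.2 (one_lt_one_div hρ0 hρ1)
    refine (h.mul_left (K * Real.exp 1)).congr fun j ↦ ?_
    rw [abs_of_pos j.cast_add_one_pos, mul_one_div]
  choose u hu hub using exists_dominated_factors_trunc ha hρ0 hgrowth
  obtain ⟨v, -, -, -, hv⟩ := HasLinearFactors.exists_limit hb hu hub fun t ↦ by
    simpa only [eval_trunc_mk, Function.comp_def] using
      (summable_mul_pow_of_growth hgrowth t).hasSum.tendsto_sum_nat.comp (tendsto_add_atTop_nat 1)
  exact ⟨v, hv⟩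

open Polynomial in
lemma eq_prod_of_eval_eq_zero {K ι : Type*} [Field K] {P : K[X]} (h0 : P.coeff 0 = 1)
    {s : Finset ι} (hdeg : P.natDegree ≤ s.card) {x : ι → K} (hx : Set.InjOn x s)
    (hroot : ∀ i ∈ s, P.eval (x i) = 0) : P = ∏ i ∈ s, (1 + C (-(x i)⁻¹) * X) := by
  classical
  have hP : P ≠ 0 := fun h ↦ by simp [h] at h0
  have hcard : (s.image x).card = s.card := Finset.card_image_of_injOn hx
  have hroots : P.roots = (s.image x).val :=
    roots_eq_of_natDegree_le_card_of_ne_zero (by simpa using hroot) (hcard ▸ hdeg) hP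
  have hsplits : P.Splits := splits_iff_card_roots.2 <|
    le_antisymm P.card_roots' (by rw [hroots, Finset.card_val, hcard]; exact hdeg)
  conv_lhs => rw [eq_prod_roots_of_coeff_zero_eq_one hsplits h0, hroots]
  exact Finset.prod_image hx

/-- `f` has simple zeros only, all of them negative real numbers, and is the genus zero product over
them. -/
structure HasSimpleNegZeros (f : ℂ → ℂ) : Prop where
  exists_factors : ∃ w : ℕ → ℂ, HasLinearFactors f w ∧ Set.InjOn w w.support
  neg_of_zero : ∀ t, f t = 0 → ∃ x : ℝ, x < 0 ∧ t = x

section Hutchinson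

lemma alternating_sum_mem_Icc_of_le_succ {T : ℕ → ℝ} {m : ℕ} (hT : 0 ≤ T 0)
    (hmono : ∀ n < m, T n ≤ T (n + 1)) :
    (-1) ^ m * ∑ n ∈ Finset.range (m + 1), (-1) ^ n * T n ∈ Set.Icc 0 (T m) := by
  induction m with
  | zero => simpa using hT
  | succ m ih =>
    obtain ⟨hlo, hhi⟩ := ih fun n hn ↦ hmono n (hn.trans m.lt_succ_self)
    have hstep := hmono m m.lt_succ_self
    rw [Finset.sum_range_succ, mul_add, ← mul_assoc, ← mul_pow, neg_one_mul, neg_neg, one_pow,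
      one_mul, pow_succ, mul_neg_one, neg_mul]
    constructor <;> linarith

lemma alternating_sum_mem_Icc_of_antitone {T : ℕ → ℝ} (hT : ∀ n, 0 ≤ T n) (hanti : Antitone T)
    (N : ℕ) : ∑ n ∈ Finset.range N, (-1) ^ n * T n ∈ Set.Icc 0 (T 0) := by
  induction N generalizing T with
  | zero => simpa using hT 0
  | succ N ih =>
    obtain ⟨hlo, hhi⟩ := ih (fun n ↦ hT (n + 1)) fun i j hij ↦ hanti (Nat.succ_le_succ hij)
    have hstep := hanti (Nat.zero_le 1)
    rw [zero_add] at hhi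
    simp only [Finset.sum_range_succ', pow_succ, mul_neg_one, neg_mul, Finset.sum_neg_distrib,
      pow_zero, one_mul]
    constructor <;> linarith

lemma alternating_sum_pos_of_peak {c : ℝ} (hc : c < 1 / 2) {T : ℕ → ℝ}
    (hT : ∀ n, 0 < T n) {m : ℕ} (hleft : ∀ n < m, T n ≤ c * T (n + 1))
    (hright : ∀ n, m ≤ n → T (n + 1) ≤ c * T n) {N : ℕ} (hmN : m ≤ N) :
    0 < (-1) ^ m * ∑ n ∈ Finset.range (N + 1), (-1) ^ n * T n := by
  obtain ⟨K, rfl⟩ := Nat.exists_eq_add_of_le hmN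
  have hsq : (-1 : ℝ) ^ m * (-1) ^ m = 1 := by rw [← mul_pow]; norm_num
  have hhead : T m - c * T m ≤ (-1) ^ m * ∑ n ∈ Finset.range (m + 1), (-1) ^ n * T n := by
    obtain _ | m := m
    · have := (hT 1).trans_le (hright 0 le_rfl)
      simpa using this.le
    · have hle := (alternating_sum_mem_Icc_of_le_succ (hT 0).le fun n hn ↦
        (hleft n (hn.trans m.lt_succ_self)).trans (by nlinarith [hT (n + 1)])).2
      rw [Finset.sum_range_succ, mul_add, ← mul_assoc, hsq, one_mul, pow_succ]
      linarith [hleft m m.lt_succ_self]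
  have htail : ∑ k ∈ Finset.range K, (-1) ^ k * T (m + 1 + k) ≤ T (m + 1) :=
    (alternating_sum_mem_Icc_of_antitone (fun k ↦ (hT (m + 1 + k)).le)
      (antitone_nat_of_succ_le fun k ↦
        (hright (m + 1 + k) (by omega)).trans (by nlinarith [hT (m + 1 + k)])) K).2
  have hsplit : (-1) ^ m * ∑ n ∈ Finset.range (m + K + 1), (-1) ^ n * T n =
      (-1) ^ m * ∑ n ∈ Finset.range (m + 1), (-1) ^ n * T n -
        ∑ k ∈ Finset.range K, (-1) ^ k * T (m + 1 + k) := by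
    have hflip (k : ℕ) : (-1 : ℝ) ^ m * ((-1) ^ (m + 1 + k) * T (m + 1 + k)) =
        -((-1) ^ k * T (m + 1 + k)) := by
      rw [← mul_assoc, pow_add, pow_succ, ← mul_assoc, ← mul_assoc, hsq]
      ring
    rw [add_right_comm, Finset.sum_range_add, mul_add, Finset.mul_sum (Finset.range K),
      Finset.sum_congr rfl fun k _ ↦ hflip k, Finset.sum_neg_distrib, sub_eq_add_neg]
  have hpeak := hright m le_rfl
  have hm := hT m
  rw [hsplit]
  nlinarith

/-- The ratio `a n / a (n + 1)`. For strongly log-concave positive coefficients `a` the zeros of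
`∑ n, a n * t ^ n` lie close to the points `-coeffRatio a n`. -/
noncomputable def coeffRatio (a : ℕ → ℝ) (n : ℕ) : ℝ := a n / a (n + 1)

variable {a : ℕ → ℝ} {c : ℝ}

lemma coeffRatio_pos (hpos : ∀ n, 0 < a n) (n : ℕ) : 0 < coeffRatio a n :=
  div_pos (hpos n) (hpos (n + 1))

lemma coeffRatio_lt_sq_mul_succ (hpos : ∀ n, 0 < a n)
    (hlog : ∀ n, a n * a (n + 2) < c ^ 2 * a (n + 1) ^ 2) (n : ℕ) :
    coeffRatio a n < c ^ 2 * coeffRatio a (n + 1) := by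
  rw [coeffRatio, coeffRatio, ← mul_div_assoc, div_lt_div_iff₀ (hpos _) (hpos _), mul_assoc,
    ← sq]
  exact hlog n

lemma strictMono_coeffRatio (hpos : ∀ n, 0 < a n) (hc : c ^ 2 < 1)
    (hlog : ∀ n, a n * a (n + 2) < c ^ 2 * a (n + 1) ^ 2) : StrictMono (coeffRatio a) :=
  strictMono_nat_of_lt_succ fun n ↦ (coeffRatio_lt_sq_mul_succ hpos hlog n).trans
    (mul_lt_of_lt_one_left (coeffRatio_pos hpos _) hc)

lemma coeffRatio_zero_le (hpos : ∀ n, 0 < a n)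
    (hlog : ∀ n, a n * a (n + 2) < c ^ 2 * a (n + 1) ^ 2) (n : ℕ) :
    coeffRatio a 0 ≤ (c ^ 2) ^ n * coeffRatio a n := by
  induction n with
  | zero => simp
  | succ n ih =>
    rw [pow_succ, mul_assoc]
    exact ih.trans (mul_le_mul_of_nonneg_left (coeffRatio_lt_sq_mul_succ hpos hlog n).le
      (by positivity))

lemma eval_neg_sign (hpos : ∀ n, 0 < a n) (hc : c < 1 / 2) {m N : ℕ} (hmN : m ≤ N) {s : ℝ}
    (hs : 0 < s) (hleft : ∀ n < m, coeffRatio a n ≤ c * s)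
    (hright : ∀ n, m ≤ n → s ≤ c * coeffRatio a n) :
    0 < (-1) ^ m * ∑ n ∈ Finset.range (N + 1), a n * (-s) ^ n := by
  have hterm (n : ℕ) : a n * (-s) ^ n = (-1) ^ n * (a n * s ^ n) := by rw [neg_pow]; ring
  have hratio (n : ℕ) : a n = coeffRatio a n * a (n + 1) :=
    (div_mul_cancel₀ _ (hpos (n + 1)).ne').symm
  have hT (n : ℕ) : 0 < a (n + 1) * s ^ n := mul_pos (hpos _) (pow_pos hs n)
  simp only [hterm]
  refine alternating_sum_pos_of_peak hc (fun n ↦ mul_pos (hpos n) (pow_pos hs n))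
    (fun n hn ↦ ?_) (fun n hn ↦ ?_) hmN
  · calc a n * s ^ n = coeffRatio a n * (a (n + 1) * s ^ n) := by rw [hratio n]; ring
      _ ≤ c * s * (a (n + 1) * s ^ n) := mul_le_mul_of_nonneg_right (hleft n hn) (hT n).le
      _ = c * (a (n + 1) * s ^ (n + 1)) := by ring
  · calc a (n + 1) * s ^ (n + 1) = s * (a (n + 1) * s ^ n) := by ring
      _ ≤ c * coeffRatio a n * (a (n + 1) * s ^ n) :=
        mul_le_mul_of_nonneg_right (hright n hn) (hT n).le
      _ = c * (a n * s ^ n) := by rw [hratio n]; ring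

lemma exists_eval_neg_eq_zero (hpos : ∀ n, 0 < a n) (hc0 : 0 < c) (hc : c < 1 / 2)
    (hlog : ∀ n, a n * a (n + 2) < c ^ 2 * a (n + 1) ^ 2) {j N : ℕ} (hj : j < N) :
    ∃ s ∈ Set.Icc (c * coeffRatio a j) (coeffRatio a j / c),
      ∑ n ∈ Finset.range (N + 1), a n * (-s) ^ n = 0 := by
  have hc1 : c ^ 2 < 1 := by nlinarith
  have hmono := (strictMono_coeffRatio hpos hc1 hlog).monotone
  have hr := coeffRatio_pos hpos j
  have hstep {m n : ℕ} (hmn : m < n) : coeffRatio a m ≤ c ^ 2 * coeffRatio a n :=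
    (coeffRatio_lt_sq_mul_succ hpos hlog m).le.trans
      (mul_le_mul_of_nonneg_left (hmono hmn) (sq_nonneg c))
  have hlo := eval_neg_sign hpos hc hj.le (mul_pos hc0 hr)
    (fun n hn ↦ by rw [← mul_assoc, ← sq]; exact hstep hn)
    fun n hn ↦ mul_le_mul_of_nonneg_left (hmono hn) hc0.le
  have hhi := eval_neg_sign hpos hc hj (div_pos hr hc0)
    (fun n hn ↦ by rw [mul_div_cancel₀ _ hc0.ne']; exact hmono (Nat.lt_succ_iff.1 hn))
    fun n hn ↦ by rw [div_le_iff₀ hc0, mul_right_comm, ← sq]; exact hstep hn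
  have hle : c * coeffRatio a j ≤ coeffRatio a j / c := by
    rw [le_div_iff₀ hc0]
    nlinarith
  have hcont : Continuous fun s : ℝ ↦
      (-1) ^ j * ∑ n ∈ Finset.range (N + 1), a n * (-s) ^ n := by fun_prop
  rw [pow_succ, mul_neg_one, neg_mul] at hhi
  obtain ⟨s, hs, hs0⟩ := intermediate_value_Icc' hle hcont.continuousOn
    ⟨(neg_pos.1 hhi).le, hlo.le⟩
  exact ⟨s, hs, (mul_eq_zero.1 hs0).resolve_left (pow_ne_zero j (by norm_num))⟩

/-- The intervals are pairwise disjoint and do not depend on `N`, so they also separate the limits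
of the `x j` as `N → ∞`. -/
lemma exists_factors_trunc_mem_Icc (ha : a 0 = 1) (hpos : ∀ n, 0 < a n) (hc0 : 0 < c)
    (hc : c < 1 / 2) (hlog : ∀ n, a n * a (n + 2) < c ^ 2 * a (n + 1) ^ 2) (N : ℕ) :
    ∃ x : ℕ → ℝ, HasLinearFactors
        (((PowerSeries.mk fun n ↦ (a n : ℂ)).trunc (N + 1)).eval ·) (fun j ↦ (x j : ℂ)) ∧
      (∀ j < N, x j ∈ Set.Icc (c / coeffRatio a j) (1 / (c * coeffRatio a j))) ∧
      ∀ j, N ≤ j → x j = 0 := by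
  choose! s hs hs0 using fun j (hj : j < N) ↦ exists_eval_neg_eq_zero hpos hc0 hc hlog hj
  have hr (j : ℕ) := coeffRatio_pos hpos j
  have hspos {j : ℕ} (hj : j < N) : 0 < s j := (mul_pos hc0 (hr j)).trans_le (hs j hj).1
  have hmono := strictMono_coeffRatio hpos (by nlinarith : c ^ 2 < 1) hlog
  have hlt {i j : ℕ} (hij : i < j) (hj : j < N) : s i < s j := by
    refine (hs i (hij.trans hj)).2.trans_lt (lt_of_lt_of_le ?_ (hs j hj).1)
    rw [div_lt_iff₀ hc0, mul_right_comm, ← sq]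
    exact (coeffRatio_lt_sq_mul_succ hpos hlog i).trans_le
      (mul_le_mul_of_nonneg_left (hmono.monotone hij) (sq_nonneg c))
  have hinj : Set.InjOn (fun j ↦ (-s j : ℂ)) (Finset.range N) := by
    have hstrict : StrictMonoOn s (Finset.range N) := fun i _ j hj hij ↦
      hlt hij (Finset.mem_range.1 hj)
    exact fun i hi j hj hij ↦ hstrict.injOn hi hj (Complex.ofReal_injective (neg_injective hij))
  have hprod := eq_prod_of_eval_eq_zero
    (P := (PowerSeries.mk fun n ↦ (a n : ℂ)).trunc (N + 1)) (by simp [PowerSeries.coeff_trunc, ha])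
    (by simpa using Nat.lt_succ_iff.1 (PowerSeries.natDegree_trunc_lt _ N)) hinj fun j hj ↦ by
      rw [eval_trunc_mk]
      exact_mod_cast hs0 j (Finset.mem_range.1 hj)
  refine ⟨fun j ↦ if j < N then (s j)⁻¹ else 0,
    .eval_of_eq_prod (s := Finset.range N) (fun j hj ↦ ?_) (hprod.trans ?_), fun j hj ↦ ?_,
    fun j hj ↦ if_neg hj.not_gt⟩
  · simp only [if_neg (Finset.mem_range.not.1 hj), Complex.ofReal_zero]
  · refine Finset.prod_congr rfl fun j hj ↦ ?_
    simp only [if_pos (Finset.mem_range.1 hj), inv_neg, neg_neg, Complex.ofReal_inv]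
  · simp only [if_pos hj, one_div]
    rw [← inv_div]
    exact ⟨inv_anti₀ (hspos hj) (hs j hj).2, inv_anti₀ (mul_pos hc0 (hr j)) (hs j hj).1⟩

lemma summable_mul_pow_of_log_concave (hpos : ∀ n, 0 < a n) (hc1 : c ^ 2 < 1)
    (hlog : ∀ n, a n * a (n + 2) < c ^ 2 * a (n + 1) ^ 2) (t : ℂ) :
    Summable fun n ↦ (a n : ℂ) * t ^ n := by
  have hr0 := coeffRatio_pos hpos 0
  have hlim : Tendsto (fun n ↦ ‖t‖ / coeffRatio a 0 * (c ^ 2) ^ n) atTop (𝓝 0) := by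
    simpa using (tendsto_pow_atTop_nhds_zero_of_lt_one (sq_nonneg c) hc1).const_mul
      (‖t‖ / coeffRatio a 0)
  refine summable_of_ratio_norm_eventually_le one_half_lt_one ?_
  filter_upwards [hlim.eventually_le_const one_half_pos] with n hn
  have hratio : ‖t‖ / coeffRatio a n ≤ 1 / 2 := by
    refine le_trans ?_ hn
    rw [div_mul_eq_mul_div, div_le_div_iff₀ (coeffRatio_pos hpos n) hr0, mul_assoc]
    exact mul_le_mul_of_nonneg_left (coeffRatio_zero_le hpos hlog n) (norm_nonneg t)
  have heq : ‖(a (n + 1) : ℂ) * t ^ (n + 1)‖ = ‖t‖ / coeffRatio a n * ‖(a n : ℂ) * t ^ n‖ := by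
    have := (hpos n).ne'
    simp only [coeffRatio, norm_mul, norm_pow, Complex.norm_real, Real.norm_of_nonneg (hpos _).le]
    field_simp
    ring
  rw [heq]
  exact mul_le_mul_of_nonneg_right hratio (norm_nonneg _)

lemma exists_strictAnti_factors (ha : a 0 = 1) (hpos : ∀ n, 0 < a n) (hc0 : 0 < c)
    (hc : c < 1 / 2) (hlog : ∀ n, a n * a (n + 2) < c ^ 2 * a (n + 1) ^ 2) :
    ∃ x : ℕ → ℝ, HasLinearFactors (fun t ↦ ∑' n, (a n : ℂ) * t ^ n) (fun j ↦ (x j : ℂ)) ∧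
      (∀ j, 0 < x j) ∧ StrictAnti x := by
  have hc1 : c ^ 2 < 1 := by nlinarith
  have hr (j : ℕ) := coeffRatio_pos hpos j
  choose u hu hmem hzero using exists_factors_trunc_mem_Icc ha hpos hc0 hc hlog
  have hbound (N j : ℕ) : ‖(u N j : ℂ)‖ ≤ 1 / (c * coeffRatio a 0) * (c ^ 2) ^ j := by
    have hcr := mul_pos hc0 (hr 0)
    rw [Complex.norm_real]
    obtain hj | hj := lt_or_ge j N
    · obtain ⟨hlo, hhi⟩ := hmem N j hj
      rw [Real.norm_of_nonneg ((div_pos hc0 (hr j)).le.trans hlo)]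
      refine hhi.trans ?_
      rw [div_mul_eq_mul_div, div_le_div_iff₀ (mul_pos hc0 (hr j)) hcr]
      nlinarith [coeffRatio_zero_le hpos hlog j]
    · rw [hzero N j hj, norm_zero]
      positivity
  have hlim (t : ℂ) := (summable_mul_pow_of_log_concave hpos hc1 hlog t).hasSum.tendsto_sum_nat
  obtain ⟨v, φ, hφ, hφv, hv⟩ := HasLinearFactors.exists_limit
    ((summable_geometric_of_lt_one (sq_nonneg c) hc1).mul_left _) hu hbound
    fun t ↦ ((hlim t).comp (tendsto_add_atTop_nat 1)).congr fun N ↦ (eval_trunc_mk _ N t).symm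
  have hvmem (j : ℕ) : v j ∈ ((↑) : ℝ → ℂ) '' Set.Icc (c / coeffRatio a j)
      (1 / (c * coeffRatio a j)) := by
    refine (isCompact_Icc.image Complex.continuous_ofReal).isClosed.mem_of_tendsto
      ((continuous_apply j).tendsto v |>.comp hφv) ?_
    filter_upwards [hφ.tendsto_atTop.eventually_gt_atTop j] with N hN
    exact ⟨_, hmem (φ N) j hN, rfl⟩
  choose x hx hxv using hvmem
  refine ⟨x, (funext hxv : (fun j ↦ (x j : ℂ)) = v) ▸ hv,
    fun j ↦ (div_pos hc0 (hr j)).trans_le (hx j).1, strictAnti_nat_of_succ_lt fun j ↦ ?_⟩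
  refine (hx (j + 1)).2.trans_lt (lt_of_lt_of_le ?_ (hx j).1)
  rw [div_lt_div_iff₀ (mul_pos hc0 (hr _)) (hr j), one_mul, ← mul_assoc, ← sq]
  exact coeffRatio_lt_sq_mul_succ hpos hlog j

/-- Hutchinson's theorem. -/
theorem hasSimpleNegZeros_of_log_concave (ha : a 0 = 1) (hpos : ∀ n, 0 < a n) (hc0 : 0 < c)
    (hc : c < 1 / 2) (hlog : ∀ n, a n * a (n + 2) < c ^ 2 * a (n + 1) ^ 2) :
    HasSimpleNegZeros fun t ↦ ∑' n, (a n : ℂ) * t ^ n := by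
  obtain ⟨x, hx, hxpos, hanti⟩ := exists_strictAnti_factors ha hpos hc0 hc hlog
  refine ⟨⟨_, hx, (Complex.ofReal_injective.comp hanti.injective).injOn⟩, fun t ht ↦ ?_⟩
  obtain ⟨j, hj⟩ := (hx.eq_zero_iff t).1 ht
  refine ⟨-(x j)⁻¹, neg_neg_of_pos (inv_pos.2 (hxpos j)), ?_⟩
  rw [Complex.ofReal_neg, Complex.ofReal_inv, eq_neg_iff_add_eq_zero,
    ← mul_left_inj' (Complex.ofReal_ne_zero.2 (hxpos j).ne'), add_mul,
    inv_mul_cancel₀ (Complex.ofReal_ne_zero.2 (hxpos j).ne'), zero_mul, add_comm, hj]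

end Hutchinson

/-- The finite `q`-Pochhammer symbol `(a; q)_m`. -/
noncomputable def qPochhammer (a q : ℝ) (m : ℕ) : ℝ := ∏ k ∈ Finset.range m, (1 - a * q ^ k)

/-- The Taylor coefficients of `qMLSeries`. -/
noncomputable def qMLCoeff (a q : ℝ) (n : ℕ) : ℝ := q ^ (n * (n - 1)) / qPochhammer a q (2 * n)

/-- The `q`-Mittag-Leffler function with the constants scaled away: up to the factor
`1 / Γ_q(γ + 1)`, `λ_{γ,σ}(z; q)` is its value at `-(σ (1 - q) z) ^ 2` for `a = q ^ (γ + 1)`. -/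
noncomputable def qMLSeries (a q : ℝ) (t : ℂ) : ℂ := ∑' n, (qMLCoeff a q n : ℂ) * t ^ n

section qMLSeries

variable {a q : ℝ}

lemma one_sub_le_one_sub_mul_pow (ha : 0 ≤ a) (hq0 : 0 < q) (hq1 : q < 1) (k : ℕ) :
    1 - a ≤ 1 - a * q ^ k :=
  sub_le_sub_left (mul_le_of_le_one_right ha (pow_le_one₀ hq0.le hq1.le)) 1

lemma one_sub_mul_pow_pos (ha0 : 0 ≤ a) (ha1 : a < 1) (hq0 : 0 < q) (hq1 : q < 1) (k : ℕ) :
    0 < 1 - a * q ^ k :=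
  (sub_pos.2 ha1).trans_le (one_sub_le_one_sub_mul_pow ha0 hq0 hq1 k)

lemma qPochhammer_pos (ha0 : 0 ≤ a) (ha1 : a < 1) (hq0 : 0 < q) (hq1 : q < 1) (m : ℕ) :
    0 < qPochhammer a q m :=
  Finset.prod_pos fun k _ ↦ one_sub_mul_pow_pos ha0 ha1 hq0 hq1 k

lemma qMLCoeff_zero : qMLCoeff a q 0 = 1 := by simp [qMLCoeff, qPochhammer]

lemma qMLCoeff_pos (ha0 : 0 ≤ a) (ha1 : a < 1) (hq0 : 0 < q) (hq1 : q < 1) (n : ℕ) :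
    0 < qMLCoeff a q n :=
  div_pos (pow_pos hq0 _) (qPochhammer_pos ha0 ha1 hq0 hq1 _)

lemma qMLCoeff_succ (ha0 : 0 ≤ a) (ha1 : a < 1) (hq0 : 0 < q) (hq1 : q < 1) (n : ℕ) :
    qMLCoeff a q (n + 1) * ((1 - a * q ^ (2 * n)) * (1 - a * q ^ (2 * n + 1))) =
      q ^ (2 * n) * qMLCoeff a q n := by
  have h1 := (one_sub_mul_pow_pos ha0 ha1 hq0 hq1 (2 * n)).ne'
  have h2 := (one_sub_mul_pow_pos ha0 ha1 hq0 hq1 (2 * n + 1)).ne'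
  have hexp : (n + 1) * (n + 1 - 1) = 2 * n + n * (n - 1) := by
    cases n with
    | zero => rfl
    | succ n => simp only [Nat.add_sub_cancel]; ring
  have hpoch : qPochhammer a q (2 * (n + 1)) =
      qPochhammer a q (2 * n) * ((1 - a * q ^ (2 * n)) * (1 - a * q ^ (2 * n + 1))) := by
    rw [qPochhammer, mul_add_one, Finset.prod_range_succ, Finset.prod_range_succ, mul_assoc]
    rfl
  rw [qMLCoeff, qMLCoeff, hexp, hpoch, pow_add, div_mul_eq_mul_div,
    mul_div_mul_right _ _ (mul_ne_zero h1 h2), mul_div_assoc]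

lemma qMLCoeff_mul_le (ha0 : 0 ≤ a) (ha1 : a < 1) (hq0 : 0 < q) (hq1 : q < 1) (n : ℕ) :
    qMLCoeff a q n * qMLCoeff a q (n + 2) ≤ q ^ 2 * qMLCoeff a q (n + 1) ^ 2 := by
  have hfac (k : ℕ) := one_sub_mul_pow_pos ha0 ha1 hq0 hq1 k
  have hmono {i j : ℕ} (hij : i ≤ j) : 1 - a * q ^ i ≤ 1 - a * q ^ j :=
    sub_le_sub_left (mul_le_mul_of_nonneg_left (pow_le_pow_of_le_one hq0.le hq1.le hij) ha0) 1
  set d : ℕ → ℝ := fun n ↦ (1 - a * q ^ (2 * n)) * (1 - a * q ^ (2 * n + 1))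
  have hdpos (n : ℕ) : 0 < d n := mul_pos (hfac _) (hfac _)
  have hdle : d n ≤ d (n + 1) :=
    mul_le_mul (hmono (by omega)) (hmono (by omega)) (hfac _).le (hfac _).le
  have h1 : qMLCoeff a q (n + 1) * d n = q ^ (2 * n) * qMLCoeff a q n :=
    qMLCoeff_succ ha0 ha1 hq0 hq1 n
  have h2 : qMLCoeff a q (n + 2) * d (n + 1) = q ^ (2 * (n + 1)) * qMLCoeff a q (n + 1) :=
    qMLCoeff_succ ha0 ha1 hq0 hq1 (n + 1)
  refine le_of_mul_le_mul_right ?_ (mul_pos (pow_pos hq0 (2 * n)) (hdpos (n + 1)))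
  calc qMLCoeff a q n * qMLCoeff a q (n + 2) * (q ^ (2 * n) * d (n + 1))
      = (q ^ (2 * n) * qMLCoeff a q n) * (qMLCoeff a q (n + 2) * d (n + 1)) := by ring
    _ = q ^ 2 * qMLCoeff a q (n + 1) ^ 2 * (q ^ (2 * n) * d n) := by rw [← h1, h2]; ring
    _ ≤ q ^ 2 * qMLCoeff a q (n + 1) ^ 2 * (q ^ (2 * n) * d (n + 1)) := by gcongr

theorem hasSimpleNegZeros_qMLSeries_of_lt_half (ha0 : 0 ≤ a) (ha1 : a < 1) (hq0 : 0 < q)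
    (hq : q < 1 / 2) : HasSimpleNegZeros (qMLSeries a q) := by
  have hq1 : q < 1 := hq.trans one_half_lt_one
  obtain ⟨c, hqc, hc⟩ := exists_between hq
  refine hasSimpleNegZeros_of_log_concave qMLCoeff_zero (qMLCoeff_pos ha0 ha1 hq0 hq1)
    (hq0.trans hqc) hc fun n ↦ (qMLCoeff_mul_le ha0 ha1 hq0 hq1 n).trans_lt ?_
  exact mul_lt_mul_of_pos_right (pow_lt_pow_left₀ hqc hq0.le two_ne_zero)
    (pow_pos (qMLCoeff_pos ha0 ha1 hq0 hq1 _) 2)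

lemma summable_qMLCoeff_mul_factorial (ha0 : 0 ≤ a) (ha1 : a < 1) (hq0 : 0 < q) (hq1 : q < 1) :
    Summable fun n ↦ qMLCoeff a q n * (2 * n).factorial := by
  have hpos := qMLCoeff_pos ha0 ha1 hq0 hq1
  have hq2 : |q ^ 2| < 1 := by
    rw [abs_sq]
    exact pow_lt_one₀ hq0.le hq1 two_ne_zero
  have hδ : 0 < (1 - a) ^ 2 * q ^ 2 := mul_pos (pow_pos (sub_pos.2 ha1) 2) (pow_pos hq0 2)
  have hlim := (tendsto_pow_const_mul_const_pow_of_abs_lt_one 2 hq2).comp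
    (tendsto_add_atTop_nat 1)
  refine summable_of_ratio_norm_eventually_le one_half_lt_one ?_
  filter_upwards [hlim.eventually_le_const (div_pos hδ (by norm_num : (0 : ℝ) < 8))] with n hn
  simp only [Function.comp_apply, Nat.cast_add_one] at hn
  have hden : (1 - a) ^ 2 ≤ (1 - a * q ^ (2 * n)) * (1 - a * q ^ (2 * n + 1)) := by
    rw [sq]
    exact mul_le_mul (one_sub_le_one_sub_mul_pow ha0 hq0 hq1 _)
      (one_sub_le_one_sub_mul_pow ha0 hq0 hq1 _) (sub_pos.2 ha1).le
      (one_sub_mul_pow_pos ha0 ha1 hq0 hq1 _).le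
  have hfac : ((2 * (n + 1)).factorial : ℝ) ≤ 4 * (n + 1) ^ 2 * (2 * n).factorial := by
    rw [mul_add_one, Nat.factorial_succ, Nat.factorial_succ, ← mul_assoc]
    push_cast
    exact mul_le_mul_of_nonneg_right (by nlinarith) (Nat.cast_nonneg _)
  rw [Real.norm_of_nonneg (mul_nonneg (hpos _).le (Nat.cast_nonneg _)),
    Real.norm_of_nonneg (mul_nonneg (hpos _).le (Nat.cast_nonneg _))]
  refine le_of_mul_le_mul_right ?_ hδ
  calc qMLCoeff a q (n + 1) * (2 * (n + 1)).factorial * ((1 - a) ^ 2 * q ^ 2)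
      = qMLCoeff a q (n + 1) * (1 - a) ^ 2 * (q ^ 2 * (2 * (n + 1)).factorial) := by ring
    _ ≤ qMLCoeff a q (n + 1) * ((1 - a * q ^ (2 * n)) * (1 - a * q ^ (2 * n + 1))) *
          (q ^ 2 * (4 * (n + 1) ^ 2 * (2 * n).factorial)) := by
        have h1 := (hpos (n + 1)).le
        have h2 := mul_nonneg h1 ((sq_nonneg (1 - a)).trans hden)
        gcongr
    _ = 4 * (((n : ℝ) + 1) ^ 2 * (q ^ 2) ^ (n + 1)) * (qMLCoeff a q n * (2 * n).factorial) := by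
        rw [qMLCoeff_succ ha0 ha1 hq0 hq1]
        ring
    _ ≤ 4 * ((1 - a) ^ 2 * q ^ 2 / 8) * (qMLCoeff a q n * (2 * n).factorial) := by
        have := (hpos n).le
        gcongr
    _ = 1 / 2 * (qMLCoeff a q n * (2 * n).factorial) * ((1 - a) ^ 2 * q ^ 2) := by ring

lemma exists_sum_qMLCoeff_mul_pow_le (ha0 : 0 ≤ a) (ha1 : a < 1) (hq0 : 0 < q) (hq1 : q < 1) :
    ∃ M, ∀ N, ∀ r : ℝ, 0 ≤ r → ∑ n ∈ Finset.range N, ‖(qMLCoeff a q n : ℂ)‖ * r ^ n ≤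
      M * Real.exp (r ^ (1 / 2 : ℝ)) := by
  obtain ⟨M, hbdd⟩ :=
    (summable_qMLCoeff_mul_factorial ha0 ha1 hq0 hq1).tendsto_atTop_zero.bddAbove_range
  have hM (n : ℕ) : qMLCoeff a q n * (2 * n).factorial ≤ M := hbdd ⟨n, rfl⟩
  have hM0 : 0 ≤ M := le_trans (by simp [qMLCoeff_zero]) (hM 0)
  refine ⟨M, fun N r hr ↦ ?_⟩
  have hterm (n : ℕ) :
      ‖(qMLCoeff a q n : ℂ)‖ * r ^ n ≤ M * (√r ^ (2 * n) / (2 * n).factorial) := by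
    have hfac : (0 : ℝ) < (2 * n).factorial := by exact_mod_cast (2 * n).factorial_pos
    rw [Complex.norm_real, Real.norm_of_nonneg (qMLCoeff_pos ha0 ha1 hq0 hq1 n).le, pow_mul,
      Real.sq_sqrt hr, mul_div_assoc', le_div_iff₀ hfac, mul_right_comm]
    exact mul_le_mul_of_nonneg_right (hM n) (pow_nonneg hr n)
  have hcosh : ∑ n ∈ Finset.range N, √r ^ (2 * n) / (2 * n).factorial ≤ Real.cosh (√r) :=
    sum_le_hasSum _ (fun n _ ↦ by positivity) (Real.hasSum_cosh _)
  calc ∑ n ∈ Finset.range N, ‖(qMLCoeff a q n : ℂ)‖ * r ^ n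
      ≤ M * ∑ n ∈ Finset.range N, √r ^ (2 * n) / (2 * n).factorial := by
        rw [Finset.mul_sum]
        exact Finset.sum_le_sum fun n _ ↦ hterm n
    _ ≤ M * Real.exp (√r) := by
        refine mul_le_mul_of_nonneg_left (hcosh.trans ?_) hM0
        linarith [Real.cosh_add_sinh (√r), Real.sinh_nonneg_iff.2 (Real.sqrt_nonneg r)]
    _ = M * Real.exp (r ^ (1 / 2 : ℝ)) := by rw [Real.sqrt_eq_rpow]

lemma summable_qMLCoeff_mul_pow (ha0 : 0 ≤ a) (ha1 : a < 1) (hq0 : 0 < q) (hq1 : q < 1) (t : ℂ) :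
    Summable fun n ↦ (qMLCoeff a q n : ℂ) * t ^ n :=
  let ⟨_, hM⟩ := exists_sum_qMLCoeff_mul_pow_le ha0 ha1 hq0 hq1
  summable_mul_pow_of_growth hM t

theorem exists_hasLinearFactors_qMLSeries (ha0 : 0 ≤ a) (ha1 : a < 1) (hq0 : 0 < q)
    (hq1 : q < 1) : ∃ w : ℕ → ℂ, HasLinearFactors (qMLSeries a q) w := by
  obtain ⟨M, hM⟩ := exists_sum_qMLCoeff_mul_pow_le ha0 ha1 hq0 hq1
  exact exists_hasLinearFactors_tsum (by rw [qMLCoeff_zero, Complex.ofReal_one]) one_half_pos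
    one_half_lt_one hM

lemma qMLSeries_zero : qMLSeries a q 0 = 1 := by
  rw [qMLSeries, tsum_eq_single 0 fun n hn ↦ by rw [zero_pow hn, mul_zero], qMLCoeff_zero]
  simp

lemma qMLSeries_conj (t : ℂ) :
    qMLSeries a q (starRingEnd ℂ t) = starRingEnd ℂ (qMLSeries a q t) := by
  simp [qMLSeries, Complex.conj_tsum]

lemma qMLSeries_ofReal_im (x : ℝ) : (qMLSeries a q x).im = 0 := by
  rw [← Complex.conj_eq_iff_im, ← qMLSeries_conj, Complex.conj_ofReal]

lemma qMLSeries_ofReal_ne_zero (ha0 : 0 ≤ a) (ha1 : a < 1) (hq0 : 0 < q) (hq1 : q < 1) {x : ℝ}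
    (hx : 0 ≤ x) : qMLSeries a q x ≠ 0 := by
  have hpos := qMLCoeff_pos ha0 ha1 hq0 hq1
  have hsum : Summable fun n ↦ qMLCoeff a q n * x ^ n := by
    exact_mod_cast summable_qMLCoeff_mul_pow ha0 ha1 hq0 hq1 (x : ℂ)
  have hreal : 0 < ∑' n, qMLCoeff a q n * x ^ n :=
    hsum.tsum_pos (fun n ↦ mul_nonneg (hpos n).le (pow_nonneg hx n)) 0 (by simpa using hpos 0)
  rw [qMLSeries]
  exact_mod_cast hreal.ne'

end qMLSeries

lemma hasSimpleNegZeros_qMLSeries {a q : ℝ} (ha0 : 0 ≤ a) (ha1 : a < 1) (hq0 : 0 < q) (hq1 : q < 1)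
    (hreal : ∀ t, qMLSeries a q t = 0 → t.im = 0)
    (hsimple : ∀ x : ℝ, qMLSeries a q x = 0 → deriv (qMLSeries a q) x ≠ 0) :
    HasSimpleNegZeros (qMLSeries a q) := by
  have hcoe (t : ℂ) (ht : qMLSeries a q t = 0) : ∃ x : ℝ, t = x :=
    ⟨t.re, Complex.ext rfl (hreal t ht)⟩
  obtain ⟨w, hw⟩ := exists_hasLinearFactors_qMLSeries ha0 ha1 hq0 hq1
  refine ⟨⟨w, hw, hw.injOn_support fun t ht ↦ ?_⟩, fun t ht ↦ ?_⟩
  · obtain ⟨x, rfl⟩ := hcoe t ht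
    exact hsimple x ht
  · obtain ⟨x, rfl⟩ := hcoe t ht
    exact ⟨x, lt_of_not_ge fun hx ↦ qMLSeries_ofReal_ne_zero ha0 ha1 hq0 hq1 hx ht, rfl⟩

lemma pos_of_eq_mul_succ_add {x y : ℕ → ℝ} {ρ l : ℝ} (hρ0 : 0 < ρ) (hρ1 : ρ < 1)
    (hrec : ∀ k, x k = ρ * x (k + 1) + y k) (hy : ∀ k, 0 ≤ y k) (hy0 : ∃ k, y k ≠ 0)
    (hx : Tendsto x atTop (𝓝 l)) : 0 < x 0 := by
  obtain ⟨k, hk⟩ := hy0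
  have hiter (K : ℕ) : x 0 = ∑ j ∈ Finset.range K, ρ ^ j * y j + ρ ^ K * x K := by
    induction K with
    | zero => simp
    | succ K ih => rw [ih, hrec K, Finset.sum_range_succ]; ring
  have hlim : Tendsto (fun K ↦ ρ ^ k * y k + ρ ^ K * x K) atTop (𝓝 (ρ ^ k * y k)) := by
    simpa using ((tendsto_pow_atTop_nhds_zero_of_lt_one hρ0.le hρ1).mul hx).const_add (ρ ^ k * y k)
  refine (mul_pos (pow_pos hρ0 k) ((hy k).lt_of_ne' hk)).trans_le (le_of_tendsto hlim ?_)
  filter_upwards [eventually_gt_atTop k] with K hK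
  rw [hiter K]
  gcongr
  exact Finset.single_le_sum (f := fun j ↦ ρ ^ j * y j)
    (fun j _ ↦ mul_nonneg (pow_nonneg hρ0.le j) (hy j)) (Finset.mem_range.2 hK)

section qTrig

/-- The case `γ = 0` of `qMLSeries`, a `q`-cosine of the square root. -/
noncomputable abbrev qCos (q : ℝ) : ℂ → ℂ := qMLSeries q q

/-- The case `γ = 1` of `qMLSeries`, the companion `q`-sine of `qCos`. -/
noncomputable abbrev qSin (q : ℝ) : ℂ → ℂ := qMLSeries (q ^ 2) q

variable {q : ℝ}

lemma qMLCoeff_sin_eq (hq0 : 0 < q) (hq1 : q < 1) (n : ℕ) :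
    qMLCoeff (q ^ 2) q n * (1 - q ^ (2 * n + 1)) = (1 - q) * qMLCoeff q q n := by
  have hshift : qPochhammer (q ^ 2) q (2 * n) * (1 - q) =
      qPochhammer q q (2 * n) * (1 - q ^ (2 * n + 1)) := by
    simp only [qPochhammer, ← pow_add, ← pow_succ']
    rw [← Finset.prod_range_succ (fun k ↦ 1 - q ^ (k + 1)), Finset.prod_range_succ', zero_add,
      pow_one]
    simp only [add_comm 2, add_assoc, one_add_one_eq_two]
  have hc := (qPochhammer_pos hq0.le hq1 hq0 hq1 (2 * n)).ne'
  have hs := (qPochhammer_pos (sq_nonneg q) (pow_lt_one₀ hq0.le hq1 two_ne_zero) hq0 hq1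
    (2 * n)).ne'
  rw [qMLCoeff, qMLCoeff, div_mul_eq_mul_div, mul_div_assoc', div_eq_div_iff hs hc, mul_assoc,
    mul_comm (1 - q ^ _), ← hshift]
  ring

lemma qMLCoeff_cos_succ (hq0 : 0 < q) (hq1 : q < 1) (n : ℕ) :
    (1 - q) * (qMLCoeff q q (n + 1) * (1 - q ^ (2 * n + 2))) =
      q ^ (2 * n) * qMLCoeff (q ^ 2) q n := by
  have hfac : 1 - q ^ (2 * n + 1) ≠ 0 := (sub_pos.2 (pow_lt_one₀ hq0.le hq1 (by omega))).ne'
  have h := qMLCoeff_succ hq0.le hq1 hq0 hq1 n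
  simp only [← pow_succ'] at h
  refine mul_right_cancel₀ hfac ?_
  calc (1 - q) * (qMLCoeff q q (n + 1) * (1 - q ^ (2 * n + 2))) * (1 - q ^ (2 * n + 1))
      = (1 - q) * (qMLCoeff q q (n + 1) * ((1 - q ^ (2 * n + 1)) * (1 - q ^ (2 * n + 2)))) := by
        ring
    _ = q ^ (2 * n) * ((1 - q) * qMLCoeff q q n) := by rw [h]; ring
    _ = q ^ (2 * n) * qMLCoeff (q ^ 2) q n * (1 - q ^ (2 * n + 1)) := by
        rw [← qMLCoeff_sin_eq hq0 hq1]; ring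

lemma summable_qCos (hq0 : 0 < q) (hq1 : q < 1) (t : ℂ) :
    Summable fun n ↦ (qMLCoeff q q n : ℂ) * t ^ n :=
  summable_qMLCoeff_mul_pow hq0.le hq1 hq0 hq1 t

lemma summable_qSin (hq0 : 0 < q) (hq1 : q < 1) (t : ℂ) :
    Summable fun n ↦ (qMLCoeff (q ^ 2) q n : ℂ) * t ^ n :=
  summable_qMLCoeff_mul_pow (sq_nonneg q) (pow_lt_one₀ hq0.le hq1 two_ne_zero) hq0 hq1 t

lemma differentiable_qCos (hq0 : 0 < q) (hq1 : q < 1) : Differentiable ℂ (qCos q) :=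
  let ⟨_, hw⟩ := exists_hasLinearFactors_qMLSeries hq0.le hq1 hq0 hq1
  hw.differentiable

lemma differentiable_qSin (hq0 : 0 < q) (hq1 : q < 1) : Differentiable ℂ (qSin q) :=
  let ⟨_, hw⟩ := exists_hasLinearFactors_qMLSeries (sq_nonneg q)
    (pow_lt_one₀ hq0.le hq1 two_ne_zero) hq0 hq1
  hw.differentiable

lemma qSin_eq (hq0 : 0 < q) (hq1 : q < 1) (t : ℂ) :
    qSin q t = q * qSin q (q ^ 2 * t) + (1 - q) * qCos q t := by
  simp only [qMLSeries]
  rw [← tsum_mul_left, ← tsum_mul_left, ← ((summable_qSin hq0 hq1 _).mul_left _).tsum_add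
    ((summable_qCos hq0 hq1 _).mul_left _)]
  refine tsum_congr fun n ↦ ?_
  have h : (qMLCoeff (q ^ 2) q n : ℂ) * (1 - q ^ (2 * n + 1)) = (1 - q) * qMLCoeff q q n := by
    exact_mod_cast qMLCoeff_sin_eq hq0 hq1 n
  rw [mul_pow, ← pow_mul]
  linear_combination t ^ n * h

lemma qCos_eq (hq0 : 0 < q) (hq1 : q < 1) (t : ℂ) :
    qCos q t = qCos q (q ^ 2 * t) + ((1 - q)⁻¹ : ℝ) * (t * qSin q (q ^ 2 * t)) := by
  have hC := summable_qCos hq0 hq1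
  simp only [qMLSeries]
  rw [(hC _).tsum_eq_zero_add, (hC _).tsum_eq_zero_add, pow_zero, pow_zero, add_assoc,
    add_right_inj, ← tsum_mul_left, ← tsum_mul_left,
    ← ((summable_nat_add_iff 1).2 (hC _)).tsum_add
      (((summable_qSin hq0 hq1 _).mul_left _).mul_left _)]
  refine tsum_congr fun n ↦ ?_
  have h : (qMLCoeff q q (n + 1) : ℂ) * (1 - q ^ (2 * n + 2)) =
      ((1 - q)⁻¹ : ℝ) * (q ^ (2 * n) * qMLCoeff (q ^ 2) q n) := by
    have h := qMLCoeff_cos_succ hq0 hq1 n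
    rw [← eq_inv_mul_iff_mul_eq₀ (sub_pos.2 hq1).ne'] at h
    exact_mod_cast h
  rw [mul_pow, mul_pow, ← pow_mul, ← pow_mul]
  linear_combination t ^ (n + 1) * h

lemma tendsto_pow_mul_nhds_zero (hq0 : 0 < q) (hq1 : q < 1) (t : ℂ) :
    Tendsto (fun k : ℕ ↦ ((q : ℂ) ^ 2) ^ k * t) atTop (𝓝 0) := by
  have hnorm : ‖(q : ℂ) ^ 2‖ < 1 := by
    rw [norm_pow, Complex.norm_real, Real.norm_of_nonneg hq0.le]
    exact pow_lt_one₀ hq0.le hq1 two_ne_zero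
  simpa using (tendsto_pow_atTop_nhds_zero_of_norm_lt_one hnorm).mul_const t

lemma exists_qSin_ne_zero (hq0 : 0 < q) (hq1 : q < 1) (t : ℂ) :
    ∃ k : ℕ, qSin q (((q : ℂ) ^ 2) ^ (k + 1) * t) ≠ 0 := by
  have hlim := ((differentiable_qSin hq0 hq1).continuous.tendsto 0).comp
    ((tendsto_pow_mul_nhds_zero hq0 hq1 t).comp (tendsto_add_atTop_nat 1))
  rw [qSin, qMLSeries_zero] at hlim
  exact (hlim.eventually_ne one_ne_zero).exists

lemma im_qCos_mul_conj_qSin (hq0 : 0 < q) (hq1 : q < 1) (t : ℂ) :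
    (qCos q t * starRingEnd ℂ (qSin q t)).im =
      q * (qCos q (q ^ 2 * t) * starRingEnd ℂ (qSin q (q ^ 2 * t))).im +
        q / (1 - q) * (t.im * Complex.normSq (qSin q (q ^ 2 * t))) := by
  have hS : (qCos q t * starRingEnd ℂ (qSin q t)).im =
      q * (qCos q t * starRingEnd ℂ (qSin q (q ^ 2 * t))).im := by
    rw [qSin_eq hq0 hq1 t]
    simp only [Complex.mul_im, Complex.mul_re, Complex.add_im, Complex.add_re, Complex.conj_im,
      Complex.conj_re, Complex.ofReal_im, Complex.ofReal_re, Complex.sub_re, Complex.sub_im,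
      Complex.one_re, Complex.one_im]
    ring
  rw [hS, qCos_eq hq0 hq1 t, Complex.normSq_apply, div_eq_mul_inv]
  generalize (1 - q)⁻¹ = κ
  simp only [Complex.mul_im, Complex.mul_re, Complex.add_im, Complex.add_re, Complex.conj_im,
    Complex.conj_re, Complex.ofReal_im, Complex.ofReal_re]
  ring

lemma qCos_mul_qSin_ne_zero (hq0 : 0 < q) (hq1 : q < 1) {t : ℂ} (ht : t.im ≠ 0) :
    qCos q t * qSin q t ≠ 0 := by
  let x (k : ℕ) : ℝ :=
    t.im * (qCos q ((q ^ 2) ^ k * t) * starRingEnd ℂ (qSin q ((q ^ 2) ^ k * t))).im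
  let y (k : ℕ) : ℝ :=
    q / (1 - q) * ((q ^ 2) ^ k * t.im ^ 2) * Complex.normSq (qSin q ((q ^ 2) ^ (k + 1) * t))
  have him (k : ℕ) : (((q : ℂ) ^ 2) ^ k * t).im = (q ^ 2) ^ k * t.im := by
    rw [← Complex.ofReal_pow, ← Complex.ofReal_pow, Complex.im_ofReal_mul]
  have hrec (k : ℕ) : x k = q * x (k + 1) + y k := by
    simp only [x, y]
    rw [im_qCos_mul_conj_qSin hq0 hq1, him, ← mul_assoc, ← pow_succ']
    ring
  have : 0 < q / (1 - q) := div_pos hq0 (sub_pos.2 hq1)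
  have hy0 : ∃ k, y k ≠ 0 := by
    obtain ⟨k, hk⟩ := exists_qSin_ne_zero hq0 hq1 t
    have := Complex.normSq_pos.2 hk
    exact ⟨k, by positivity⟩
  have hcont : Continuous fun z ↦ t.im * (qCos q z * starRingEnd ℂ (qSin q z)).im := by
    have := (differentiable_qCos hq0 hq1).continuous
    have := (differentiable_qSin hq0 hq1).continuous
    fun_prop
  have hpos : 0 < x 0 := pos_of_eq_mul_succ_add hq0 hq1 hrec
    (fun k ↦ mul_nonneg (by positivity) (Complex.normSq_nonneg _)) hy0
    ((hcont.tendsto 0).comp (tendsto_pow_mul_nhds_zero hq0 hq1 t))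
  intro h
  obtain h | h := mul_eq_zero.1 h <;> simp [x, h] at hpos

/-- The Wronskian of `qCos` and `qSin`; where it does not vanish, neither function has a multiple
zero. -/
noncomputable def qWronskian (q : ℝ) (t : ℂ) : ℂ :=
  deriv (qCos q) t * qSin q t - qCos q t * deriv (qSin q) t

lemma qWronskian_eq (hq0 : 0 < q) (hq1 : q < 1) (t : ℂ) :
    qWronskian q t = (q ^ 3 : ℝ) * qWronskian q (q ^ 2 * t) +
      (q / (1 - q) : ℝ) * qSin q (q ^ 2 * t) ^ 2 := by
  have hC := differentiable_qCos hq0 hq1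
  have hS := differentiable_qSin hq0 hq1
  have hscale : HasDerivAt (fun t : ℂ ↦ (q : ℂ) ^ 2 * t) (q ^ 2) t := hasDerivAt_const_mul _
  have hCs := (hC _).hasDerivAt.comp t hscale
  have hSs := (hS _).hasDerivAt.comp t hscale
  have hdS := (hS t).hasDerivAt.unique <| ((hSs.const_mul (q : ℂ)).add
    ((hC t).hasDerivAt.const_mul (1 - q : ℂ))).congr_of_eventuallyEq
      (.of_forall fun z ↦ qSin_eq hq0 hq1 z)
  have hdC := (hC t).hasDerivAt.unique <|
    (hCs.add (((hasDerivAt_id t).mul hSs).const_mul _)).congr_of_eventuallyEq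
      (.of_forall fun z ↦ qCos_eq hq0 hq1 z)
  simp only [Function.comp_apply, id_eq] at hdC
  rw [qWronskian, qWronskian, hdS, qSin_eq hq0 hq1 t, hdC, qCos_eq hq0 hq1 t]
  push_cast
  ring

lemma qWronskian_ne_zero (hq0 : 0 < q) (hq1 : q < 1) (x : ℝ) : qWronskian q x ≠ 0 := by
  let u (k : ℕ) : ℝ := (qWronskian q ((q ^ 2) ^ k * x)).re
  let y (k : ℕ) : ℝ := q / (1 - q) * Complex.normSq (qSin q ((q ^ 2) ^ (k + 1) * x))
  have hsq (k : ℕ) : (qSin q ((q ^ 2) ^ (k + 1) * x) ^ 2).re =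
      Complex.normSq (qSin q ((q ^ 2) ^ (k + 1) * x)) := by
    have him := qMLSeries_ofReal_im (a := q ^ 2) (q := q) ((q ^ 2) ^ (k + 1) * x)
    push_cast at him
    rw [sq, Complex.mul_re, Complex.normSq_apply, him]
    ring
  have hrec (k : ℕ) : u k = q ^ 3 * u (k + 1) + y k := by
    simp only [u, y]
    rw [qWronskian_eq hq0 hq1, ← mul_assoc _ _ (x : ℂ), ← pow_succ', Complex.add_re,
      Complex.re_ofReal_mul, Complex.re_ofReal_mul, hsq]
  have hq : 0 < q / (1 - q) := div_pos hq0 (sub_pos.2 hq1)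
  have hy0 : ∃ k, y k ≠ 0 := by
    obtain ⟨k, hk⟩ := exists_qSin_ne_zero hq0 hq1 x
    exact ⟨k, (mul_pos hq (Complex.normSq_pos.2 hk)).ne'⟩
  have hcont : Continuous (qWronskian q) := by
    have hC := differentiable_qCos hq0 hq1
    have hS := differentiable_qSin hq0 hq1
    exact ((hC.contDiff.continuous_deriv le_rfl).mul hS.continuous).sub
      (hC.continuous.mul (hS.contDiff.continuous_deriv le_rfl))
  have hpos : 0 < u 0 := pos_of_eq_mul_succ_add (pow_pos hq0 3)
    (pow_lt_one₀ hq0.le hq1 three_ne_zero) hrec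
    (fun k ↦ mul_nonneg hq.le (Complex.normSq_nonneg _)) hy0
    (((Complex.continuous_re.comp hcont).tendsto 0).comp (tendsto_pow_mul_nhds_zero hq0 hq1 x))
  intro h
  simp [u, h] at hpos

theorem hasSimpleNegZeros_qCos (hq0 : 0 < q) (hq1 : q < 1) : HasSimpleNegZeros (qCos q) :=
  hasSimpleNegZeros_qMLSeries hq0.le hq1 hq0 hq1
    (fun _ h ↦ of_not_not fun ht ↦ qCos_mul_qSin_ne_zero hq0 hq1 ht (mul_eq_zero_of_left h _))
    fun x (h : qCos q x = 0) (h' : deriv (qCos q) x = 0) ↦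
      qWronskian_ne_zero hq0 hq1 x (by rw [qWronskian, h, h']; ring)

theorem hasSimpleNegZeros_qSin (hq0 : 0 < q) (hq1 : q < 1) : HasSimpleNegZeros (qSin q) :=
  hasSimpleNegZeros_qMLSeries (sq_nonneg q) (pow_lt_one₀ hq0.le hq1 two_ne_zero) hq0 hq1
    (fun _ h ↦ of_not_not fun ht ↦ qCos_mul_qSin_ne_zero hq0 hq1 ht (mul_eq_zero_of_right _ h))
    fun x (h : qSin q x = 0) (h' : deriv (qSin q) x = 0) ↦
      qWronskian_ne_zero hq0 hq1 x (by rw [qWronskian, h, h']; ring)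

end qTrig

section qGamma

variable {a q x γ σ : ℝ}

lemma summable_norm_neg_mul_pow (hq0 : 0 < q) (hq1 : q < 1) :
    Summable fun k : ℕ ↦ ‖-(a * q ^ k)‖ :=
  ((summable_geometric_of_lt_one hq0.le hq1).mul_left a).neg.norm

lemma qPochInf_eq_mul (hq0 : 0 < q) (hq1 : q < 1) :
    qPochInf a q = (1 - a) * qPochInf (a * q) q := by
  have hm := multipliable_one_add_of_summable (summable_norm_neg_mul_pow (a := a * q) hq0 hq1)
  simp only [← sub_eq_add_neg, mul_assoc, ← pow_succ'] at hm
  calc qPochInf a q = (1 - a * q ^ 0) * ∏' k : ℕ, (1 - a * q ^ (k + 1)) :=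
        tprod_eq_zero_mul' (f := fun k ↦ 1 - a * q ^ k) hm
    _ = (1 - a) * qPochInf (a * q) q := by
        simp only [qPochInf, mul_assoc, ← pow_succ', pow_zero, mul_one]

lemma qPochInf_ne_zero (ha0 : 0 ≤ a) (ha1 : a < 1) (hq0 : 0 < q) (hq1 : q < 1) :
    qPochInf a q ≠ 0 := by
  have h := tprod_one_add_ne_zero_of_summable (f := fun k : ℕ ↦ -(a * q ^ k))
    (fun k ↦ by
      rw [← sub_eq_add_neg]
      exact (one_sub_mul_pow_pos ha0 ha1 hq0 hq1 k).ne')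
    (summable_norm_neg_mul_pow hq0 hq1)
  simpa only [qPochInf, sub_eq_add_neg] using h

lemma qGamma_ne_zero (hq0 : 0 < q) (hq1 : q < 1) (hx : 0 < x) : qGamma q x ≠ 0 :=
  div_ne_zero
    (mul_ne_zero (qPochInf_ne_zero hq0.le hq1 hq0 hq1)
      (Real.rpow_pos_of_pos (sub_pos.2 hq1) _).ne')
    (qPochInf_ne_zero (Real.rpow_nonneg hq0.le x) (Real.rpow_lt_one hq0.le hq1 hx) hq0 hq1)

lemma one_sub_mul_qGamma_add_one (hq0 : 0 < q) (hq1 : q < 1) (hx : 0 < x) :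
    (1 - q) * qGamma q (x + 1) = (1 - q ^ x) * qGamma q x := by
  have hqx : q ^ x < 1 := Real.rpow_lt_one hq0.le hq1 hx
  have hqx1 : q ^ x * q < 1 := mul_lt_one_of_nonneg_of_lt_one_left (by positivity) hqx hq1.le
  have : qPochInf (q ^ x * q) q ≠ 0 := qPochInf_ne_zero (by positivity) hqx1 hq0 hq1
  have hpow : (1 - q) ^ (1 - x) = (1 - q) ^ (1 - (x + 1)) * (1 - q) := by
    rw [← Real.rpow_add_one (sub_pos.2 hq1).ne']
    congr 1
    ring
  have : 1 - q ^ x ≠ 0 := (sub_pos.2 hqx).ne'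
  rw [qGamma, qGamma, hpow, qPochInf_eq_mul (a := q ^ x) hq0 hq1, Real.rpow_add_one hq0.ne']
  field_simp

lemma one_sub_pow_mul_qGamma_add_nat (hq0 : 0 < q) (hq1 : q < 1) (hx : 0 < x) (m : ℕ) :
    (1 - q) ^ m * qGamma q (x + m) = qPochhammer (q ^ x) q m * qGamma q x := by
  induction m with
  | zero => simp [qPochhammer]
  | succ m ih =>
    calc (1 - q) ^ (m + 1) * qGamma q (x + (m + 1 : ℕ))
        = (1 - q) ^ m * ((1 - q) * qGamma q (x + m + 1)) := by
          rw [pow_succ, mul_assoc, Nat.cast_succ, ← add_assoc]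
      _ = (1 - q ^ x * q ^ m) * ((1 - q) ^ m * qGamma q (x + m)) := by
          rw [one_sub_mul_qGamma_add_one hq0 hq1 (by positivity), Real.rpow_add_natCast hq0.ne']
          ring
      _ = qPochhammer (q ^ x) q (m + 1) * qGamma q x := by
          rw [ih, qPochhammer, qPochhammer, Finset.prod_range_succ]
          ring

lemma div_qGamma_eq_qMLCoeff (hq0 : 0 < q) (hq1 : q < 1) (hγ : -1 < γ) (n : ℕ) :
    q ^ (n * (n - 1)) / qGamma q (2 * n + γ + 1) =
      1 / qGamma q (γ + 1) * (qMLCoeff (q ^ (γ + 1)) q n * (1 - q) ^ (2 * n)) := by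
  have hx : 0 < γ + 1 := by linarith
  have hG : qGamma q (γ + 1) ≠ 0 := qGamma_ne_zero hq0 hq1 hx
  have hGn : qGamma q (2 * n + γ + 1) ≠ 0 := by
    refine qGamma_ne_zero hq0 hq1 ?_
    rw [add_assoc]
    positivity
  have hP := (qPochhammer_pos (by positivity) (Real.rpow_lt_one hq0.le hq1 hx) hq0 hq1 (2 * n)).ne'
  have h := one_sub_pow_mul_qGamma_add_nat hq0 hq1 hx (2 * n)
  rw [show γ + 1 + (2 * n : ℕ) = 2 * n + γ + 1 by push_cast; ring] at h
  rw [qMLCoeff]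
  field_simp
  linear_combination -h

lemma qML_eq_qMLSeries (hq0 : 0 < q) (hq1 : q < 1) (hγ : -1 < γ) (z : ℂ) :
    qML γ σ q z = ((1 / qGamma q (γ + 1) : ℝ) : ℂ) *
      qMLSeries (q ^ (γ + 1)) q (-(((σ * (1 - q) : ℝ) : ℂ) * z) ^ 2) := by
  rw [qML, qMLSeries, ← tsum_mul_left]
  refine tsum_congr fun n ↦ ?_
  rw [mul_div_assoc, div_qGamma_eq_qMLCoeff hq0 hq1 hγ, neg_pow (_ ^ 2 : ℂ), ← pow_mul, mul_pow,
    Complex.ofReal_mul σ, mul_pow (σ : ℂ)]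
  push_cast
  ring

lemma hasSimpleNegZeros_qMLSeries_rpow (hq0 : 0 < q) (hq1 : q < 1) (hγ : -1 < γ)
    (h : γ = 0 ∨ γ = 1 ∨ q < 1 / 2) : HasSimpleNegZeros (qMLSeries (q ^ (γ + 1)) q) := by
  rcases h with rfl | rfl | hq
  · rw [zero_add, Real.rpow_one]
    exact hasSimpleNegZeros_qCos hq0 hq1
  · rw [one_add_one_eq_two, Real.rpow_two]
    exact hasSimpleNegZeros_qSin hq0 hq1
  · exact hasSimpleNegZeros_qMLSeries_of_lt_half (by positivity)
      (Real.rpow_lt_one hq0.le hq1 (by linarith)) hq0 hq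

lemma condR.eq_zero_or_eq_one_or_lt_half (hR : condR q γ) (hq0 : 0 < q) (hq1 : q < 1) :
    γ = 0 ∨ γ = 1 ∨ q < 1 / 2 := by
  rcases hR with (h | h) | ⟨⟨hγ, -⟩, -, h⟩
  · exact .inl h
  · exact .inr (.inl h)
  · have hq : 0 ≤ q⁻¹ * (1 - q) := mul_nonneg (inv_nonneg.2 hq0.le) (sub_nonneg.2 hq1.le)
    have hfac {x : ℝ} (hx : 0 < x) : 0 ≤ 1 - q ^ x :=
      sub_nonneg.2 (Real.rpow_le_one hq0.le hq1.le hx.le)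
    have hle (x : ℝ) : 1 - q ^ x ≤ 1 := sub_le_self 1 (Real.rpow_nonneg hq0.le x)
    have hlt : 1 < q⁻¹ * (1 - q) := calc
      1 < q⁻¹ * (1 - q) * (1 - q ^ (γ + 1)) * (1 - q ^ (γ + 2)) := h
      _ ≤ q⁻¹ * (1 - q) * (1 - q ^ (γ + 1)) :=
        mul_le_of_le_one_right (mul_nonneg hq (hfac (by linarith))) (hle _)
      _ ≤ q⁻¹ * (1 - q) := mul_le_of_le_one_right hq (hle _)
    rw [inv_mul_eq_div, one_lt_div hq0] at hlt
    exact .inr (.inr (by linarith))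

end qGamma

namespace HasSimpleNegZeros

variable {ι : Type*} {f : ℂ → ℂ} {c : ℝ} {ε : ι → ℝ}

lemma exists_pos_eq_neg_sq (hf : HasSimpleNegZeros f) (hc : c ≠ 0) {t : ℂ} (ht : f t = 0) :
    ∃ x : ℝ, 0 < x ∧ t = -((c : ℂ) * x) ^ 2 := by
  obtain ⟨y, hy, rfl⟩ := hf.neg_of_zero t ht
  refine ⟨√(-y) / |c|, div_pos (Real.sqrt_pos.2 (neg_pos.2 hy)) (abs_pos.2 hc), ?_⟩
  have hsq : (c * (√(-y) / |c|)) ^ 2 = -y := by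
    rw [mul_pow, div_pow, sq_abs, Real.sq_sqrt (neg_pos.2 hy).le,
      mul_div_cancel₀ _ (pow_ne_zero 2 hc)]
  rw [← Complex.ofReal_mul, ← Complex.ofReal_pow, hsq, Complex.ofReal_neg, neg_neg]

lemma im_eq_zero (hf : HasSimpleNegZeros f) (hc : c ≠ 0) {z : ℂ}
    (hz : f (-((c : ℂ) * z) ^ 2) = 0) : z.im = 0 := by
  obtain ⟨x, -, hx⟩ := hf.exists_pos_eq_neg_sq hc hz
  have hsq : z ^ 2 = (x : ℂ) ^ 2 := by
    rwa [neg_inj, mul_pow, mul_pow,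
      mul_right_inj' (pow_ne_zero 2 (Complex.ofReal_ne_zero.2 hc))] at hx
  rcases sq_eq_sq_iff_eq_or_eq_neg.1 hsq with rfl | rfl <;> simp

lemma hasLinearFactors_inv_sq (hf : HasSimpleNegZeros f) (hc : c ≠ 0) (hε : Function.Injective ε)
    (hpos : ∀ n, 0 < ε n)
    (hzeros : ∀ x : ℝ, 0 < x → (f (-((c : ℂ) * x) ^ 2) = 0 ↔ x ∈ Set.range ε)) :
    HasLinearFactors f fun n ↦ (((c : ℂ) * ε n) ^ 2)⁻¹ := by
  obtain ⟨w, hw, hinj⟩ := hf.exists_factors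
  have hx : Function.Injective fun n ↦ -((c : ℂ) * ε n) ^ 2 := fun m n h ↦ by
    have hsq : (c * ε m) ^ 2 = (c * ε n) ^ 2 := by exact_mod_cast neg_inj.1 h
    rw [mul_pow, mul_pow, mul_right_inj' (pow_ne_zero 2 hc),
      pow_left_inj₀ (hpos m).le (hpos n).le two_ne_zero] at hsq
    exact hε hsq
  have hrange : Set.range (fun n ↦ -((c : ℂ) * ε n) ^ 2) = {t | f t = 0} := by
    refine Set.Subset.antisymm (Set.range_subset_iff.2 fun n ↦ (hzeros _ (hpos n)).2 ⟨n, rfl⟩)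
      fun t ht ↦ ?_
    obtain ⟨x, hx, rfl⟩ := hf.exists_pos_eq_neg_sq hc ht
    obtain ⟨n, rfl⟩ := (hzeros x hx).1 ht
    exact ⟨n, rfl⟩
  simpa only [inv_neg, neg_neg] using hw.reindex_zeros hinj hx hrange

end HasSimpleNegZeros

section EvenProduct

variable {ι : Type*} {f : ℂ → ℂ} {c : ℝ}

lemma one_add_neg_sq_mul_inv_sq (hc : c ≠ 0) (x : ℝ) (z : ℂ) :
    1 + -((c : ℂ) * z) ^ 2 * (((c : ℂ) * x) ^ 2)⁻¹ = 1 - z ^ 2 / (x : ℂ) ^ 2 := by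
  rw [neg_mul, ← sub_eq_add_neg, ← div_eq_mul_inv, mul_pow, mul_pow,
    mul_div_mul_left _ _ (pow_ne_zero 2 (Complex.ofReal_ne_zero.2 hc))]

lemma HasLinearFactors.comp_neg_sq_eq_tprod {ε : ι → ℝ}
    (hf : HasLinearFactors f fun n ↦ (((c : ℂ) * ε n) ^ 2)⁻¹) (hc : c ≠ 0) (z : ℂ) :
    f (-((c : ℂ) * z) ^ 2) = ∏' n, (1 - z ^ 2 / (ε n : ℂ) ^ 2) := by
  simp only [hf.eq_tprod, one_add_neg_sq_mul_inv_sq hc]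

lemma HasLinearFactors.tendstoUniformlyOn_comp_neg_sq {ε : ℕ → ℝ}
    (hf : HasLinearFactors f fun n ↦ (((c : ℂ) * ε n) ^ 2)⁻¹) (hc : c ≠ 0) {K : Set ℂ}
    (hK : IsCompact K) :
    TendstoUniformlyOn (fun N z ↦ ∏ n ∈ Finset.range N, (1 - z ^ 2 / (ε n : ℂ) ^ 2))
      (fun z ↦ f (-((c : ℂ) * z) ^ 2)) atTop K := by
  have hcont : Continuous fun z : ℂ ↦ -((c : ℂ) * z) ^ 2 := by fun_prop
  have h := ((hf.hasProdUniformlyOn (hK.image hcont)).tendstoUniformlyOn_finsetRange.comp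
    fun z : ℂ ↦ -((c : ℂ) * z) ^ 2).mono (Set.subset_preimage_image _ K)
  simpa only [Function.comp_def, one_add_neg_sq_mul_inv_sq hc] using h

end EvenProduct

theorem stmt3_general (q σ γ : ℝ) (hq0 : 0 < q) (hq1 : q < 1) (hσ : σ ≠ 0) (hγ : -1 < γ)
    (h : γ = 0 ∨ γ = 1 ∨ q < 1 / 2)
    (ε : ℕ → ℝ) (hε : Function.Injective ε) (hpos : ∀ n, 0 < ε n)
    (hzero : ∀ n, qML γ σ q (ε n : ℂ) = 0)
    (hall : ∀ x : ℝ, 0 < x → qML γ σ q (x : ℂ) = 0 → ∃ n, x = ε n) :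
    {z : ℂ | qML γ σ q z = 0}.Infinite ∧
    (∀ z : ℂ, qML γ σ q z = 0 → z.im = 0) ∧
    (∀ z : ℂ, qML γ σ q z =
      ((1 / qGamma q (γ + 1) : ℝ) : ℂ) * ∏' n : ℕ, (1 - z ^ 2 / (ε n : ℂ) ^ 2)) ∧
    (∀ K : Set ℂ, IsCompact K →
      TendstoUniformlyOn
        (fun (N : ℕ) (z : ℂ) =>
          ((1 / qGamma q (γ + 1) : ℝ) : ℂ) *
            ∏ n ∈ Finset.range N, (1 - z ^ 2 / (ε n : ℂ) ^ 2))
        (qML γ σ q) Filter.atTop K) := by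
  have hc : σ * (1 - q) ≠ 0 := mul_ne_zero hσ (sub_pos.2 hq1).ne'
  have hG : ((1 / qGamma q (γ + 1) : ℝ) : ℂ) ≠ 0 :=
    Complex.ofReal_ne_zero.2 (one_div_ne_zero (qGamma_ne_zero hq0 hq1 (by linarith)))
  have hL : qML γ σ q = fun z ↦ ((1 / qGamma q (γ + 1) : ℝ) : ℂ) *
      qMLSeries (q ^ (γ + 1)) q (-(((σ * (1 - q) : ℝ) : ℂ) * z) ^ 2) :=
    funext (qML_eq_qMLSeries hq0 hq1 hγ)
  have hzero_iff (z : ℂ) : qML γ σ q z = 0 ↔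
      qMLSeries (q ^ (γ + 1)) q (-(((σ * (1 - q) : ℝ) : ℂ) * z) ^ 2) = 0 := by
    simp only [hL, mul_eq_zero, hG, false_or]
  have hneg := hasSimpleNegZeros_qMLSeries_rpow hq0 hq1 hγ h
  have hfac := hneg.hasLinearFactors_inv_sq hc hε hpos fun x hx ↦ by
    rw [← hzero_iff]
    exact ⟨fun hx0 ↦ (hall x hx hx0).imp fun _ ↦ Eq.symm, by rintro ⟨n, rfl⟩; exact hzero n⟩
  refine ⟨Set.infinite_of_injective_forall_mem (Complex.ofReal_injective.comp hε) hzero,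
    fun z hz ↦ hneg.im_eq_zero hc ((hzero_iff z).1 hz), fun z ↦ ?_, fun K hK ↦ ?_⟩
  · rw [hL, ← hfac.comp_neg_sq_eq_tprod hc]
  · rw [hL]
    exact (uniformContinuous_const_smul (_ : ℂ)).comp_tendstoUniformlyOn
      (hfac.tendstoUniformlyOn_comp_neg_sq hc hK)

theorem stmt3 (q σ γ : ℝ) (hq0 : 0 < q) (hq1 : q < 1) (hσ : 0 < σ)
    (hγ0 : 0 ≤ γ) (hγ2 : γ < 2) (hR : condR q γ)
    (ε : ℕ → ℝ) (hmono : StrictMono ε) (hpos : ∀ n, 0 < ε n)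
    (hzero : ∀ n, qML γ σ q (ε n : ℂ) = 0)
    (hall : ∀ x : ℝ, 0 < x → qML γ σ q (x : ℂ) = 0 → ∃ n, x = ε n) :
    {z : ℂ | qML γ σ q z = 0}.Infinite ∧
    (∀ z : ℂ, qML γ σ q z = 0 → z.im = 0) ∧
    (∀ z : ℂ, qML γ σ q z =
      ((1 / qGamma q (γ + 1) : ℝ) : ℂ) * ∏' n : ℕ, (1 - z ^ 2 / (ε n : ℂ) ^ 2)) ∧
    (∀ K : Set ℂ, IsCompact K →
      TendstoUniformlyOn
        (fun (N : ℕ) (z : ℂ) =>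
          ((1 / qGamma q (γ + 1) : ℝ) : ℂ) *
            ∏ n ∈ Finset.range N, (1 - z ^ 2 / (ε n : ℂ) ^ 2))
        (qML γ σ q) Filter.atTop K) :=
  stmt3_general q σ γ hq0 hq1 hσ.ne' (by linarith) (hR.eq_zero_or_eq_one_or_lt_half hq0 hq1) ε
    hmono.injective hpos hzero hall
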